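/- arXiv:1301.7321 — 6 statements merged into one kernel-verified Lean document; each statement's English description precedes it below -/
import Mathlib

section
/- Let (Σ, I, →, ≼) be a WSTS, let P ⊆ Σ be downward-closed, and define the backward-reachability sequence U_0 := Σ \ P, U_{i+1} := U_i ∪ Pre(U_i). Suppose U_L = U_{L+1} for some L. Then Cover ⊆ P if and only if I ∩ U_L = ∅. Moreover, if I ∩ U_L = ∅, then Σ \ U_L contains I, is contained in P, and satisfies Post(Σ \ U_L) ⊆ Σ \ U_L. -/
/-!
Every state of `U L` can reach the complement of `P`, so if an initial state lies in `U L`, then the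
reachable set, hence the cover, is not contained in `P`. Conversely, stabilization means
`PreSet tr (U L) ⊆ U L`, that is, the complement of `U L` is closed under successors; it is contained
in `P` because `Pᶜ = U 0 ⊆ U L`. If it contains `I`, it is therefore an inductive invariant containing
all reachable states, and the cover is contained in `P` because `P` is downward-closed.
-/

/-- Upward closure of a set w.r.t. a quasi-order. -/
def UpClosure {σ : Type*} (le : σ → σ → Prop) (X : Set σ) : Set σ := {y | ∃ x ∈ X, le x y}

/-- Downward closure of a set w.r.t. a quasi-order. -/
def DownClosure {σ : Type*} (le : σ → σ → Prop) (X : Set σ) : Set σ := {y | ∃ x ∈ X, le y x}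

/-- Successors of a set under a transition relation. -/
def PostSet {σ : Type*} (tr : σ → σ → Prop) (X : Set σ) : Set σ := {y | ∃ x ∈ X, tr x y}

/-- Predecessors of a set under a transition relation. -/
def PreSet {σ : Type*} (tr : σ → σ → Prop) (X : Set σ) : Set σ := {y | ∃ x ∈ X, tr y x}

/-- `le` is a well-quasi-order: reflexive, transitive, and every infinite sequence
has indices `i < j` with `f i ≤ f j`. -/
def IsWqo {σ : Type*} (le : σ → σ → Prop) : Prop :=
  Reflexive le ∧ Transitive le ∧ ∀ f : ℕ → σ, ∃ i j : ℕ, i < j ∧ le (f i) (f j)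

/-- WSTS compatibility: a larger state can simulate a transition in several steps. -/
def Compat {σ : Type*} (tr le : σ → σ → Prop) : Prop :=
  ∀ s₁ s₂ t₁, tr s₁ s₂ → le s₁ t₁ → ∃ t₂, Relation.ReflTransGen tr t₁ t₂ ∧ le s₂ t₂

/-- Strong compatibility: a larger state can simulate a transition in one step. -/
def StrongCompat {σ : Type*} (tr le : σ → σ → Prop) : Prop :=
  ∀ s₁ s₂ t₁, tr s₁ s₂ → le s₁ t₁ → ∃ t₂, tr t₁ t₂ ∧ le s₂ t₂

/-- `StepN tr k x y` means there is a path of length exactly `k` from `x` to `y`. -/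
def StepN {σ : Type*} (tr : σ → σ → Prop) : ℕ → σ → σ → Prop
  | 0 => Eq
  | n+1 => fun x z => ∃ y, tr x y ∧ StepN tr n y z

/-- The set of `le`-minimal elements of `Y`. -/
def MinSet {σ : Type*} (le : σ → σ → Prop) (Y : Set σ) : Set σ :=
  {y ∈ Y | ∀ z ∈ Y, le z y → le y z}

/-- Every state of `U i` has a path leaving `P`. -/
lemma exists_reach_compl_of_mem {σ : Type*} {tr : σ → σ → Prop} {P : Set σ} {U : ℕ → Set σ}
    (hU0 : U 0 = Pᶜ) (hUs : ∀ i, U (i+1) = U i ∪ PreSet tr (U i)) (i : ℕ) :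
    ∀ x ∈ U i, ∃ y, Relation.ReflTransGen tr x y ∧ y ∉ P := by
  induction i with
  | zero =>
    intro x hx
    rw [hU0] at hx
    exact ⟨x, .refl, hx⟩
  | succ n ih =>
    intro x hx
    rw [hUs] at hx
    rcases hx with hx | ⟨z, hz, hxz⟩
    · exact ih x hx
    · obtain ⟨y, hzy, hy⟩ := ih z hz
      exact ⟨y, .head hxz hzy, hy⟩

/-- Correctness of the backward-reachability sequence once it stabilizes. -/
theorem stmt3 {σ : Type*} (le tr : σ → σ → Prop) (I : Set σ)
    (hwqo : IsWqo le) (hIfin : I.Finite) (hcompat : Compat tr le)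
    (P : Set σ) (hP : P = DownClosure le P)
    (U : ℕ → Set σ) (hU0 : U 0 = Pᶜ) (hUs : ∀ i, U (i+1) = U i ∪ PreSet tr (U i))
    (L : ℕ) (hL : U L = U (L+1)) :
    (DownClosure le {y | ∃ x ∈ I, Relation.ReflTransGen tr x y} ⊆ P ↔ I ∩ U L = ∅) ∧
      (I ∩ U L = ∅ →
        I ⊆ (U L)ᶜ ∧ (U L)ᶜ ⊆ P ∧ PostSet tr ((U L)ᶜ) ⊆ (U L)ᶜ) := by
  have hmono : Monotone U := monotone_nat_of_le_succ fun i => by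
    rw [hUs i]
    exact Set.subset_union_left
  have hsub : (U L)ᶜ ⊆ P := by
    rw [Set.compl_subset_comm, ← hU0]
    exact hmono (Nat.zero_le L)
  have hpost : PostSet tr ((U L)ᶜ) ⊆ (U L)ᶜ := by
    rintro y ⟨x, hx, hxy⟩ hy
    apply hx
    rw [hL, hUs]
    exact Or.inr ⟨y, hy, hxy⟩
  have hinit : I ∩ U L = ∅ → I ⊆ (U L)ᶜ := fun h =>
    Set.subset_compl_iff_disjoint_right.2 (Set.disjoint_iff_inter_eq_empty.2 h)
  refine ⟨⟨fun hcov => ?_, fun h => ?_⟩, fun h => ⟨hinit h, hsub, hpost⟩⟩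
  · rw [Set.eq_empty_iff_forall_notMem]
    rintro x ⟨hxI, hxU⟩
    obtain ⟨y, hxy, hy⟩ := exists_reach_compl_of_mem hU0 hUs L x hxU
    exact hy (hcov ⟨y, ⟨x, hxI, hxy⟩, hwqo.1 y⟩)
  · rintro z ⟨y, ⟨x, hxI, hxy⟩, hzy⟩
    have hy : y ∈ (U L)ᶜ := by
      clear hzy
      induction hxy with
      | refl => exact hinit h hxI
      | tail _ hbc ih => exact hpost ⟨_, ih, hbc⟩
    rw [hP]
    exact ⟨y, hsub hy, hzy⟩
end

section
/- Let (Σ, I, →, ≼) be a WSTS, let P ⊆ Σ be downward-closed, and let R = (R_0, …, R_N) with R_0 = ↓I be a vector of downward-closed subsets of Σ satisfying invariants (I1)–(I4). Let 1 ≤ m ≤ N and let b ∈ Σ satisfy ↑{b} ∩ I = ∅ and Pre(↑{b}) ∩ (R_m \ ↑{b}) = ∅ (i.e. b is a valid generalization relative to R_m). Then the vector R' obtained from R by replacing R_k with R_k \ ↑{b} for all 1 ≤ k ≤ m again consists of downward-closed sets and satisfies invariants (I1)–(I4). -/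
/-- Blocking a valid generalization `b` up to level `m` preserves invariants (I1)-(I4). -/
theorem stmt6 {σ : Type*} (le tr : σ → σ → Prop) (I : Set σ)
    (hwqo : IsWqo le) (hIfin : I.Finite) (hcompat : Compat tr le)
    (P : Set σ) (hP : P = DownClosure le P)
    (N : ℕ) (R : ℕ → Set σ) (hR0 : R 0 = DownClosure le I)
    (hdown : ∀ i ≤ N, R i = DownClosure le (R i))
    (hI1 : ∀ i ≤ N, I ⊆ R i)
    (hI2 : ∀ i < N, PostSet tr (R i) ⊆ R (i+1))
    (hI3 : ∀ i < N, R i ⊆ R (i+1))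
    (hI4 : ∀ i < N, R i ⊆ P)
    (m : ℕ) (hm1 : 1 ≤ m) (hmN : m ≤ N)
    (b : σ) (hbI : UpClosure le {b} ∩ I = ∅)
    (hbInd : PreSet tr (UpClosure le {b}) ∩ (R m \ UpClosure le {b}) = ∅)
    (R' : ℕ → Set σ)
    (hR' : ∀ k, R' k = if 1 ≤ k ∧ k ≤ m then R k \ UpClosure le {b} else R k) :
    (∀ i ≤ N, R' i = DownClosure le (R' i)) ∧
      (∀ i ≤ N, I ⊆ R' i) ∧
      (∀ i < N, PostSet tr (R' i) ⊆ R' (i+1)) ∧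
      (∀ i < N, R' i ⊆ R' (i+1)) ∧
      (∀ i < N, R' i ⊆ P) := by
  obtain ⟨hrefl, htrans, -⟩ := hwqo
  have mem_up : ∀ x, x ∈ UpClosure le {b} ↔ le b x := fun x => by simp [UpClosure]
  have hbI' : ∀ x ∈ I, ¬ le b x := fun x hx hbx =>
    (Set.eq_empty_iff_forall_notMem.mp hbI) x ⟨(mem_up x).2 hbx, hx⟩
  have hbInd' : ∀ x y, tr x y → x ∈ R m → ¬ le b x → ¬ le b y := fun x y hxy hx hbx hby =>
    (Set.eq_empty_iff_forall_notMem.mp hbInd) x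
      ⟨⟨y, (mem_up y).2 hby, hxy⟩, hx, fun h => hbx ((mem_up x).1 h)⟩
  have hdown' : ∀ i ≤ N, ∀ x ∈ R i, ∀ y, le y x → y ∈ R i := fun i hi x hx y hyx => by
    rw [hdown i hi]
    exact ⟨x, hx, hyx⟩
  have hmono : ∀ j, ∀ i ≤ j, j ≤ N → R i ⊆ R j := fun j i hij => by
    induction j, hij using Nat.le_induction with
    | base => exact fun _ => subset_rfl
    | succ k _ ih => exact fun hk => (ih (by omega)).trans (hI3 k (by omega))
  -- Level `0` may be treated like levels `1, …, m`: `R 0 = ↓I` already avoids `↑{b}`.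
  have mem_R' : ∀ k x, x ∈ R' k ↔ x ∈ R k ∧ (k ≤ m → ¬ le b x) := fun k x => by
    rw [hR']
    split_ifs with h
    · simp [mem_up, h.2]
    · refine ⟨fun hx => ⟨hx, fun hk hbx => ?_⟩, And.left⟩
      obtain rfl : k = 0 := by omega
      rw [hR0] at hx
      obtain ⟨z, hz, hxz⟩ := hx
      exact hbI' z hz (htrans hbx hxz)
  refine ⟨fun i hi => Set.Subset.antisymm (fun x hx => ⟨x, hx, hrefl x⟩) ?_, ?_, ?_, ?_, ?_⟩
  · rintro y ⟨x, hx, hyx⟩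
    rw [mem_R'] at hx ⊢
    exact ⟨hdown' i hi x hx.1 y hyx, fun him hby => hx.2 him (htrans hby hyx)⟩
  · intro i hi x hx
    exact (mem_R' i x).2 ⟨hI1 i hi hx, fun _ => hbI' x hx⟩
  · rintro i hi y ⟨x, hx, hxy⟩
    rw [mem_R'] at hx ⊢
    refine ⟨hI2 i hi ⟨x, hx.1, hxy⟩, fun him => ?_⟩
    -- If level `i + 1` is blocked, then `x ∈ R i \ ↑{b} ⊆ R m \ ↑{b}`.
    exact hbInd' x y hxy (hmono m i (by omega) hmN hx.1) (hx.2 (by omega))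
  · intro i hi x hx
    rw [mem_R'] at hx ⊢
    exact ⟨hI3 i hi hx.1, fun him => hx.2 (by omega)⟩
  · intro i hi x hx
    exact hI4 i hi ((mem_R' i x).1 hx).1
end

section
/- Let (Σ, I, →, ≼) be a WSTS, let P ⊆ Σ be downward-closed, let R = (R_0, …, R_N) be a vector of downward-closed subsets of Σ satisfying invariants (I1)–(I4), and let U_0 := Σ \ P, U_{i+1} := U_i ∪ Pre(U_i). Then R_{N−1−i} ∩ U_i = ∅ for all i with 0 ≤ i < N − 1. -/
/-- Disjointness of the approximations `R` and the backward reachability sets `U`. -/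
theorem stmt7 {σ : Type*} (le tr : σ → σ → Prop) (I : Set σ)
    (hwqo : IsWqo le) (hIfin : I.Finite) (hcompat : Compat tr le)
    (P : Set σ) (hP : P = DownClosure le P)
    (N : ℕ) (R : ℕ → Set σ)
    (hdown : ∀ i ≤ N, R i = DownClosure le (R i))
    (hI1 : ∀ i ≤ N, I ⊆ R i)
    (hI2 : ∀ i < N, PostSet tr (R i) ⊆ R (i+1))
    (hI3 : ∀ i < N, R i ⊆ R (i+1))
    (hI4 : ∀ i < N, R i ⊆ P)
    (U : ℕ → Set σ) (hU0 : U 0 = Pᶜ) (hUs : ∀ i, U (i+1) = U i ∪ PreSet tr (U i)) :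
    ∀ i, i < N - 1 → R (N - 1 - i) ∩ U i = ∅ := by
  -- Induction on `i`. A point of `R (N-1-(i+1))` lies in `R (N-1-i)` by (I3), and its
  -- successors lie there by (I2), so neither it nor any successor is in `U i`.
  intro i
  induction i with
  | zero =>
    intro h
    rw [hU0, ← Set.disjoint_iff_inter_eq_empty, Set.disjoint_compl_right_iff_subset]
    exact hI4 _ (by omega)
  | succ i ih =>
    intro h
    have ih := ih (by omega)
    have hk : N - 1 - i = N - 1 - (i + 1) + 1 := by omega
    have hlt : N - 1 - (i + 1) < N := by omega
    rw [hk, Set.eq_empty_iff_forall_notMem] at ih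
    rw [Set.eq_empty_iff_forall_notMem, hUs]
    rintro x ⟨hx, hxU | ⟨y, hy, hxy⟩⟩
    · exact ih x ⟨hI3 _ hlt hx, hxU⟩
    · exact ih y ⟨hI2 _ hlt ⟨x, hx, hxy⟩, hy⟩
end

section
/- Let (Σ, I, →, ≼) be a strongly compatible WSTS with ≼ antisymmetric, let P ⊆ Σ be downward-closed, let U_0 := Σ \ P, U_{i+1} := U_i ∪ Pre(U_i), and let D_0 := min(Σ \ P), D_{i+1} := (⋃_{a ∈ D_i} min(Pre(↑{a}))) \ U_i. If U_L = U_{L+1} for some L, then D_i = ∅ for all i > L, and consequently the set ⋃_{i ≥ 0} D_i is finite. -/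
/-- Minimal elements of a set form an antichain, so an injective sequence of them would be a bad
sequence for the wqo. -/
theorem finite_minSet {σ : Type*} {le : σ → σ → Prop} (hwqo : IsWqo le)
    (hanti : ∀ x y, le x y → le y x → x = y) (Y : Set σ) : (MinSet le Y).Finite := by
  by_contra hinf
  have hinf : (MinSet le Y).Infinite := hinf
  let f := hinf.natEmbedding
  obtain ⟨i, j, hij, hle⟩ := hwqo.2.2 (fun n => (f n : σ))
  have hge := (f j).2.2 _ (f i).2.1 hle
  exact hij.ne (f.injective (Subtype.ext (hanti _ _ hle hge)))

/-- The sets of backward reachability are upward-closed. -/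
theorem backward_upward {σ : Type*} {le tr : σ → σ → Prop} (hcompat : StrongCompat tr le)
    {P : Set σ} (hP : P = DownClosure le P) {U : ℕ → Set σ}
    (hU0 : U 0 = Pᶜ) (hUs : ∀ i, U (i+1) = U i ∪ PreSet tr (U i)) (i : ℕ) :
    ∀ x y, x ∈ U i → le x y → y ∈ U i := by
  induction i with
  | zero =>
    intro x y hx hxy
    rw [hU0] at hx ⊢
    intro hy
    apply hx
    rw [hP]
    exact ⟨y, hy, hxy⟩
  | succ i ih =>
    intro x y hx hxy
    rw [hUs] at hx ⊢
    rcases hx with hx | ⟨z, hz, hxz⟩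
    · exact Or.inl (ih x y hx hxy)
    · obtain ⟨w, hyw, hzw⟩ := hcompat x z y hxz hxy
      exact Or.inr ⟨w, ih z w hz hzw, hyw⟩

/-- Once backward reachability stabilizes at level `L`, the sets `D i` are empty for `i > L`,
and the union of all `D i` is finite. -/
theorem stmt9 {σ : Type*} (le tr : σ → σ → Prop) (I : Set σ)
    (hwqo : IsWqo le) (hanti : ∀ x y, le x y → le y x → x = y)
    (hIfin : I.Finite) (hcompat : StrongCompat tr le)
    (P : Set σ) (hP : P = DownClosure le P)
    (U D : ℕ → Set σ)
    (hU0 : U 0 = Pᶜ) (hUs : ∀ i, U (i+1) = U i ∪ PreSet tr (U i))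
    (hD0 : D 0 = MinSet le Pᶜ)
    (hDs : ∀ i, D (i+1) =
      (⋃ a ∈ D i, MinSet le (PreSet tr (UpClosure le {a}))) \ U i)
    (L : ℕ) (hL : U L = U (L+1)) :
    (∀ i, L < i → D i = ∅) ∧ (⋃ i, D i).Finite := by
  have hup := backward_upward hcompat hP hU0 hUs
  have hDU : ∀ i, D i ⊆ U i := by
    intro i
    induction i with
    | zero =>
      rw [hD0, hU0]
      exact fun x hx => hx.1
    | succ i ih =>
      intro x hx
      rw [hDs] at hx
      simp only [Set.mem_diff, Set.mem_iUnion] at hx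
      obtain ⟨⟨a, ha, ⟨y, ⟨b, rfl, hby⟩, hxy⟩, -⟩, -⟩ := hx
      rw [hUs]
      exact Or.inr ⟨y, hup i b y (ih ha) hby, hxy⟩
  have hstab : ∀ k, U (L + k) = U L := by
    intro k
    induction k with
    | zero => rfl
    | succ k ih => rw [← add_assoc, hUs, ih, ← hUs, ← hL]
  have hempty : ∀ i, L < i → D i = ∅ := by
    intro i hi
    obtain ⟨k, rfl⟩ := Nat.exists_eq_add_of_lt hi
    refine Set.eq_empty_of_forall_notMem fun x hx => ?_
    have hxU := hDU _ hx
    rw [add_assoc, hstab, ← hstab k] at hxU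
    rw [hDs] at hx
    exact hx.2 hxU
  have hfin : ∀ i, (D i).Finite := by
    intro i
    induction i with
    | zero =>
      rw [hD0]
      exact finite_minSet hwqo hanti _
    | succ i ih =>
      rw [hDs]
      exact (ih.biUnion fun a _ => finite_minSet hwqo hanti _).subset Set.diff_subset
  refine ⟨hempty, ((Set.finite_le_nat L).biUnion fun i _ => hfin i).subset ?_⟩
  intro x hx
  obtain ⟨i, hi⟩ := Set.mem_iUnion.1 hx
  refine Set.mem_biUnion (x := i) ?_ hi
  by_contra hlt
  rw [hempty i (not_le.1 hlt)] at hi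
  exact hi
end

section
/- Let (Σ, I, →, ≼) be a WSTS with ≼ antisymmetric, let P ⊆ Σ be downward-closed, let R = (R_0, …, R_N) be a vector of downward-closed subsets of Σ satisfying invariants (I1)–(I4), let U_0 := Σ \ P, U_{i+1} := U_i ∪ Pre(U_i), and let D_0 := min(Σ \ P), D_{i+1} := (⋃_{a ∈ D_i} min(Pre(↑{a}))) \ U_i. Then for every i with 0 ≤ i < N − 1 and every a ∈ D_i: if Pre(↑{a}) ∩ R_{N−i−1} ≠ ∅, then there exists x ∈ Pre(↑{a}) ∩ D_{i+1} ∩ R_{N−i−1}. -/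
theorem IsWqo.wellFounded_strict {σ : Type*} {le : σ → σ → Prop} (h : IsWqo le) :
    WellFounded (fun x y => le x y ∧ ¬ le y x) := by
  obtain ⟨hr, ht, hf⟩ := h
  rw [wellFounded_iff_isEmpty_descending_chain]
  refine ⟨fun ⟨f, hdesc⟩ => ?_⟩
  obtain ⟨i, j, hij, hle⟩ := hf f
  have hmono : ∀ k, le (f (i + 1 + k)) (f (i + 1)) := by
    intro k
    induction k with
    | zero => exact hr _
    | succ k ih => exact ht (hdesc (i + 1 + k)).1 ih
  obtain ⟨k, rfl⟩ := Nat.exists_eq_add_of_le (Nat.succ_le_of_lt hij)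
  exact (hdesc i).2 (ht hle (hmono k))

theorem exists_minSet_le {σ : Type*} {le : σ → σ → Prop} (h : IsWqo le) {Y : Set σ} {y : σ}
    (hy : y ∈ Y) : ∃ x ∈ MinSet le Y, le x y := by
  induction y using h.wellFounded_strict.induction with
  | _ y ih =>
    by_cases hmin : ∀ z ∈ Y, le z y → le y z
    · exact ⟨y, ⟨hy, hmin⟩, h.1 y⟩
    · push Not at hmin
      obtain ⟨z, hz, hzy, hyz⟩ := hmin
      obtain ⟨x, hx, hxz⟩ := ih z ⟨hzy, hyz⟩ hz
      exact ⟨x, hx, h.2.1 hxz hzy⟩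

/-- States of `R j` cannot reach the complement of `P` in at most `i` steps if `j + i < N`. -/
theorem notMem_U_of_mem_R {σ : Type*} {tr : σ → σ → Prop} {P : Set σ} {N : ℕ} {R U : ℕ → Set σ}
    (hI2 : ∀ i < N, PostSet tr (R i) ⊆ R (i+1)) (hI4 : ∀ i < N, R i ⊆ P)
    (hU0 : U 0 = Pᶜ) (hUs : ∀ i, U (i+1) = U i ∪ PreSet tr (U i)) (i : ℕ) :
    ∀ j, j + i < N → ∀ x ∈ R j, x ∉ U i := by
  induction i with
  | zero =>
    intro j hj x hx hxU
    rw [hU0] at hxU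
    exact hxU (hI4 j hj hx)
  | succ i ih =>
    intro j hj x hx hxU
    rw [hUs] at hxU
    rcases hxU with hxU | ⟨z, hz, hxz⟩
    · exact ih j (by omega) x hx hxU
    · exact ih (j + 1) (by omega) z (hI2 j (by omega) ⟨x, hx, hxz⟩) hz

/-- If a state `a ∈ D i` has a predecessor in `R (N-i-1)`, it has one that lies
in `D (i+1)` as well. -/
theorem stmt12 {σ : Type*} (le tr : σ → σ → Prop) (I : Set σ)
    (hwqo : IsWqo le) (hanti : ∀ x y, le x y → le y x → x = y)
    (hIfin : I.Finite) (hcompat : Compat tr le)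
    (P : Set σ) (hP : P = DownClosure le P)
    (N : ℕ) (R : ℕ → Set σ)
    (hdown : ∀ i ≤ N, R i = DownClosure le (R i))
    (hI1 : ∀ i ≤ N, I ⊆ R i)
    (hI2 : ∀ i < N, PostSet tr (R i) ⊆ R (i+1))
    (hI3 : ∀ i < N, R i ⊆ R (i+1))
    (hI4 : ∀ i < N, R i ⊆ P)
    (U D : ℕ → Set σ)
    (hU0 : U 0 = Pᶜ) (hUs : ∀ i, U (i+1) = U i ∪ PreSet tr (U i))
    (hD0 : D 0 = MinSet le Pᶜ)
    (hDs : ∀ i, D (i+1) =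
      (⋃ a ∈ D i, MinSet le (PreSet tr (UpClosure le {a}))) \ U i) :
    ∀ i, i < N - 1 → ∀ a ∈ D i,
      (PreSet tr (UpClosure le {a}) ∩ R (N - i - 1)).Nonempty →
      ∃ x, x ∈ PreSet tr (UpClosure le {a}) ∧ x ∈ D (i+1) ∧ x ∈ R (N - i - 1) := by
  intro i hi a ha ⟨y, hy, hyR⟩
  obtain ⟨x, hx, hxy⟩ := exists_minSet_le hwqo hy
  have hxR : x ∈ R (N - i - 1) := by
    rw [hdown _ (by omega)]
    exact ⟨y, hyR, hxy⟩
  refine ⟨x, hx.1, ?_, hxR⟩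
  rw [hDs]
  exact ⟨Set.mem_biUnion ha hx,
    notMem_U_of_mem_R hI2 hI4 hU0 hUs i (N - i - 1) (by omega) x hxR⟩
end

section
/- Fix n ≥ 1, let a, c, g ∈ ℕⁿ and d ∈ ℤⁿ, and suppose c ≤ max(a − d, g) componentwise in ℤ. Define a'' ∈ ℤⁿ by a''_j := c_j + d_j if g_j < c_j, and a''_j := 0 if g_j ≥ c_j, for j = 1, …, n. Then a'' ≤ a componentwise, and for every a' ∈ ℕⁿ with a'' ≤ a' ≤ a componentwise, one has c ≤ max(a' − d, g) componentwise in ℤ. -/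
/-- Generalization of a state w.r.t. a blocking state `c`: the state `a''` lies below `a`,
and any `a'` between `a''` and `a` keeps its predecessor blocked by `c`. -/
theorem stmt16 (n : ℕ) (hn : 1 ≤ n) (a c g : Fin n → ℕ) (d : Fin n → ℤ)
    (hc : ∀ j, (c j : ℤ) ≤ max ((a j : ℤ) - d j) ((g j : ℤ)))
    (a'' : Fin n → ℤ)
    (ha'' : ∀ j, a'' j = if (g j : ℤ) < (c j : ℤ) then (c j : ℤ) + d j else 0) :
    (∀ j, a'' j ≤ (a j : ℤ)) ∧
      ∀ a' : Fin n → ℕ, (∀ j, a'' j ≤ (a' j : ℤ)) → (∀ j, (a' j : ℤ) ≤ (a j : ℤ)) →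
        ∀ j, (c j : ℤ) ≤ max ((a' j : ℤ) - d j) ((g j : ℤ)) := by
  -- Coordinatewise: if `c j ≤ g j` the bound `g j` suffices; otherwise the maximum must be
  -- attained by its first argument, and `c j ≤ x - d j` is the same as `c j + d j ≤ x`.
  refine ⟨fun j => ?_, fun a' h _ j => ?_⟩
  · have h1 := hc j
    rw [ha'' j]
    split_ifs <;> omega
  · have h1 := h j
    rw [ha'' j] at h1
    split_ifs at h1 <;> omega
end
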